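/- arXiv:1811.08405 — 3 statements merged into one kernel-verified Lean document; each statement's English description precedes it below -/
import Mathlib

section
/- The fused transfer matrix T₂ has 2N central zeroes: for every b ∈ {1, …, N} and every u ∈ ℂ with u⁶ = q² ξ_b² (i.e. with spectral parameter λ = u³ equal to q ξ_b or −q ξ_b), one has T₂(u) = 0 in End(H). -/
open Matrix Kronecker BigOperators

/-- Elementary 3×3 matrices `E i j`. -/
noncomputable def Eb (i j : Fin 3) : Matrix (Fin 3) (Fin 3) ℂ :=
  Matrix.single i j 1

/-- Principal gradation trigonometric R-matrix of `U_q(gl₃^)`, with spectral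
parameter `λ = u³` parametrized by the cube root `u`. -/
noncomputable def RpM (q u : ℂ) : Matrix (Fin 3 × Fin 3) (Fin 3 × Fin 3) ℂ :=
  (∑ k : Fin 3, ∑ p : Fin 3,
    if k = p then (u ^ 3 * q - (u ^ 3 * q)⁻¹) • (Eb k k ⊗ₖ Eb k k)
    else (u ^ 3 - (u ^ 3)⁻¹) • (Eb k k ⊗ₖ Eb p p))
  + (q - q⁻¹) • ∑ k : Fin 3, ∑ p : Fin 3,
      (if k < p then
        u ^ ((3 : ℤ) - 2 * (((p : ℕ) : ℤ) - ((k : ℕ) : ℤ))) • (Eb k p ⊗ₖ Eb p k)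
        + u ^ (2 * (((p : ℕ) : ℤ) - ((k : ℕ) : ℤ)) - (3 : ℤ)) • (Eb p k ⊗ₖ Eb k p)
      else 0)

/-- Index type of the quantum space `H = (ℂ³)^{⊗N}`. -/
abbrev HIdx (N : ℕ) := Fin N → Fin 3

/-- `R_{a,b}(u)`: the R-matrix acting on the auxiliary space and the `b`-th
factor of the quantum space, identity elsewhere. -/
noncomputable def Raux (N : ℕ) (q u : ℂ) (b : Fin N) :
    Matrix (Fin 3 × HIdx N) (Fin 3 × HIdx N) ℂ :=
  Matrix.of fun x y =>
    RpM q u (x.1, x.2 b) (y.1, y.2 b) * (if ∀ c, c ≠ b → x.2 c = y.2 c then 1 else 0)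

/-- The twist matrix acting on the auxiliary space, identity on `H`. -/
noncomputable def Kaux (N : ℕ) (K : Matrix (Fin 3) (Fin 3) ℂ) :
    Matrix (Fin 3 × HIdx N) (Fin 3 × HIdx N) ℂ :=
  Matrix.of fun x y => K x.1 y.1 * (if x.2 = y.2 then 1 else 0)

/-- Monodromy matrix `M(u) = K_a R_{a,N}(u/ζ_N) ⋯ R_{a,1}(u/ζ_1)`. -/
noncomputable def Mon (N : ℕ) (q : ℂ) (ζ : Fin N → ℂ) (K : Matrix (Fin 3) (Fin 3) ℂ)
    (u : ℂ) : Matrix (Fin 3 × HIdx N) (Fin 3 × HIdx N) ℂ :=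
  Kaux N K * (((List.finRange N).reverse.map fun b => Raux N q (u / ζ b) b).prod)

/-- Transfer matrix `T₁(u) = tr_a M(u)`. -/
noncomputable def T1 (N : ℕ) (q : ℂ) (ζ : Fin N → ℂ) (K : Matrix (Fin 3) (Fin 3) ℂ)
    (u : ℂ) : Matrix (HIdx N) (HIdx N) ℂ :=
  Matrix.of fun f g => ∑ i : Fin 3, Mon N q ζ K u (i, f) (i, g)

/-- The q-antisymmetric projector `P⁻ = R_q(p⁻¹)/(2(q⁻¹ − q))`. -/
noncomputable def Pm (q p : ℂ) : Matrix (Fin 3 × Fin 3) (Fin 3 × Fin 3) ℂ :=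
  (2 * (q⁻¹ - q))⁻¹ • RpM q p⁻¹

/-- Embedding of an operator on (auxiliary space a) ⊗ H into
(aux a) ⊗ (aux b) ⊗ H, identity on aux b. -/
noncomputable def embA (N : ℕ) (M : Matrix (Fin 3 × HIdx N) (Fin 3 × HIdx N) ℂ) :
    Matrix (Fin 3 × Fin 3 × HIdx N) (Fin 3 × Fin 3 × HIdx N) ℂ :=
  Matrix.of fun x y => M (x.1, x.2.2) (y.1, y.2.2) * (if x.2.1 = y.2.1 then 1 else 0)

/-- Embedding of an operator on (auxiliary space b) ⊗ H into
(aux a) ⊗ (aux b) ⊗ H, identity on aux a. -/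
noncomputable def embB (N : ℕ) (M : Matrix (Fin 3 × HIdx N) (Fin 3 × HIdx N) ℂ) :
    Matrix (Fin 3 × Fin 3 × HIdx N) (Fin 3 × Fin 3 × HIdx N) ℂ :=
  Matrix.of fun x y => M (x.2.1, x.2.2) (y.2.1, y.2.2) * (if x.1 = y.1 then 1 else 0)

/-- Embedding of an operator on (aux a) ⊗ (aux b) into (aux a) ⊗ (aux b) ⊗ H. -/
noncomputable def embP (N : ℕ) (P : Matrix (Fin 3 × Fin 3) (Fin 3 × Fin 3) ℂ) :
    Matrix (Fin 3 × Fin 3 × HIdx N) (Fin 3 × Fin 3 × HIdx N) ℂ :=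
  Matrix.of fun x y => P (x.1, x.2.1) (y.1, y.2.1) * (if x.2.2 = y.2.2 then 1 else 0)

/-- Fused transfer matrix `T₂(u) = tr_{ab}(P⁻_{ab} M_b(u) M_a(u/p))`. -/
noncomputable def T2 (N : ℕ) (q p : ℂ) (ζ : Fin N → ℂ) (K : Matrix (Fin 3) (Fin 3) ℂ)
    (u : ℂ) : Matrix (HIdx N) (HIdx N) ℂ :=
  Matrix.of fun f g => ∑ ia : Fin 3, ∑ ib : Fin 3,
    (embP N (Pm q p) * embB N (Mon N q ζ K u) * embA N (Mon N q ζ K (u / p)))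
      (ia, ib, f) (ia, ib, g)


/-- Weight of the `R`-matrix term preserving the two-site state `(i, j)`. -/
noncomputable def diagWeight (q u : ℂ) (i j : Fin 3) : ℂ :=
  if i = j then u ^ 3 * q - (u ^ 3 * q)⁻¹ else u ^ 3 - (u ^ 3)⁻¹

/-- Weight of the `R`-matrix term exchanging the two-site state `(i, j)`. -/
noncomputable def swapWeight (q u : ℂ) (i j : Fin 3) : ℂ :=
  if i = j then 0 else if j = i + 1 then (q - q⁻¹) * u else (q - q⁻¹) * u⁻¹

set_option maxHeartbeats 1000000 in
theorem RpM_apply (q u : ℂ) (i j k l : Fin 3) :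
    RpM q u (i, j) (k, l) =
      (if k = i ∧ l = j then diagWeight q u i j else 0) +
        (if k = j ∧ l = i then swapWeight q u i j else 0) := by
  fin_cases i <;> fin_cases j <;> fin_cases k <;> fin_cases l <;>
    simp [RpM, Eb, Fin.sum_univ_three, diagWeight, swapWeight]

/-- The `R`-matrix acting on the first two of three sites. -/
noncomputable def actAB (q u : ℂ) (φ : Fin 3 → Fin 3 → Fin 3 → ℂ) (i j k : Fin 3) : ℂ :=
  diagWeight q u i j * φ i j k + swapWeight q u i j * φ j i k

/-- The `R`-matrix acting on the first and third of three sites. -/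
noncomputable def actAC (q u : ℂ) (φ : Fin 3 → Fin 3 → Fin 3 → ℂ) (i j k : Fin 3) : ℂ :=
  diagWeight q u i k * φ i j k + swapWeight q u i k * φ k j i

/-- The `R`-matrix acting on the last two of three sites. -/
noncomputable def actBC (q u : ℂ) (φ : Fin 3 → Fin 3 → Fin 3 → ℂ) (i j k : Fin 3) : ℂ :=
  diagWeight q u j k * φ i j k + swapWeight q u j k * φ i k j

theorem yang_baxter {q v w : ℂ} (hq : q ≠ 0) (hv : v ≠ 0) (hw : w ≠ 0)
    (φ : Fin 3 → Fin 3 → Fin 3 → ℂ) :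
    actBC q v (actAC q (v * w) (actAB q w φ)) =
      actAB q w (actAC q (v * w) (actBC q v φ)) := by
  funext i j k
  fin_cases i <;> fin_cases j <;> fin_cases k <;>
    simp [actAB, actAC, actBC, diagWeight, swapWeight] <;> field_simp <;> ring

theorem actBC_actAC_actAB_eq_zero {p w : ℂ} (hp : p ≠ 0) (hw : w ^ 6 = 1)
    (φ : Fin 3 → Fin 3 → Fin 3 → ℂ) :
    actBC (p ^ 3) (w * p) (actAC (p ^ 3) w (actAB (p ^ 3) p⁻¹ φ)) = 0 := by
  obtain ⟨r, hr⟩ : ∃ r, p⁻¹ = r := ⟨_, rfl⟩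
  have hpr : p * r = 1 := hr ▸ mul_inv_cancel₀ hp
  have hrinv : r⁻¹ = p := by rw [← hr, inv_inv]
  have hp3 : (p ^ 3)⁻¹ = r ^ 3 := by rw [← inv_pow, hr]
  have hr3 : (r ^ 3)⁻¹ = p ^ 3 := by rw [← inv_pow, hrinv]
  have hwinv : w⁻¹ = w ^ 5 := inv_eq_of_mul_eq_one_right (by rw [← hw]; ring)
  have hw3 : (w ^ 3)⁻¹ = w ^ 3 := inv_eq_of_mul_eq_one_right (by rw [← hw]; ring)
  rw [hr]
  funext i j k
  fin_cases i <;> fin_cases j <;> fin_cases k <;>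
    simp [actAB, actAC, actBC, diagWeight, swapWeight, mul_pow, hr, hrinv, hp3, hr3,
      hwinv, hw3, -mul_eq_zero] <;>
    clear hr hrinv hp3 hr3 hwinv hw3 <;> grind

/-- Restriction of a state to the two auxiliary sites and the quantum site `s`, the other quantum
sites being frozen to `f`. -/
def localState {N : ℕ} (s : Fin N) (f : HIdx N) (ψ : Fin 3 × Fin 3 × HIdx N → ℂ)
    (i j k : Fin 3) : ℂ :=
  ψ (i, j, Function.update f s k)

theorem ext_localState {N : ℕ} (s : Fin N) {ψ χ : Fin 3 × Fin 3 × HIdx N → ℂ}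
    (h : ∀ f, localState s f ψ = localState s f χ) : ψ = χ := by
  funext ⟨i, j, f⟩
  simpa [localState] using congrFun (congrFun (congrFun (h f) i) j) (f s)

/-- `Raux` couples `f` only to itself and to the state with the site `s` exchanged. -/
theorem sum_Raux_mul (N : ℕ) (q u : ℂ) (s : Fin N) (i : Fin 3) (f : HIdx N)
    (ψ : Fin 3 → HIdx N → ℂ) :
    ∑ k, ∑ g, Raux N q u s (i, f) (k, g) * ψ k g =
      diagWeight q u i (f s) * ψ i f +
        swapWeight q u i (f s) * ψ (f s) (Function.update f s i) := by
  have h (k : Fin 3) : ∑ g, Raux N q u s (i, f) (k, g) * ψ k g =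
      ∑ m, RpM q u (i, f s) (k, m) * ψ k (Function.update f s m) := by
    symm
    apply Finset.sum_of_injOn (fun m => Function.update f s m)
    · intro m _ m' _ hm
      simpa using congrFun hm s
    · simp
    · intro g _ hg
      have : ¬ ∀ c, c ≠ s → f c = g c := by
        intro hc
        refine hg ⟨g s, by simp, ?_⟩
        funext c
        by_cases hcs : c = s
        · subst hcs; simp
        · simp [hcs, hc c hcs]
      simp only [Raux, of_apply, if_neg this, mul_zero, zero_mul]
    · intro m _
      simp +contextual [Raux]
  simp only [h, RpM_apply, add_mul, Finset.sum_add_distrib, ite_mul, zero_mul, ite_and]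
  simp

theorem embA_mulVec (N : ℕ) (M : Matrix (Fin 3 × HIdx N) (Fin 3 × HIdx N) ℂ)
    (ψ : Fin 3 × Fin 3 × HIdx N → ℂ) (i j : Fin 3) (f : HIdx N) :
    (embA N M *ᵥ ψ) (i, j, f) = ∑ k, ∑ g, M (i, f) (k, g) * ψ (k, j, g) := by
  simp only [mulVec, dotProduct, embA, of_apply, Fintype.sum_prod_type, mul_ite, mul_one,
    mul_zero, ite_mul, zero_mul]
  refine Finset.sum_congr rfl fun k _ => ?_
  rw [Finset.sum_comm]
  simp

theorem embB_mulVec (N : ℕ) (M : Matrix (Fin 3 × HIdx N) (Fin 3 × HIdx N) ℂ)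
    (ψ : Fin 3 × Fin 3 × HIdx N → ℂ) (i j : Fin 3) (f : HIdx N) :
    (embB N M *ᵥ ψ) (i, j, f) = ∑ k, ∑ g, M (j, f) (k, g) * ψ (i, k, g) := by
  simp only [mulVec, dotProduct, embB, of_apply, Fintype.sum_prod_type, mul_ite, mul_one,
    mul_zero, ite_mul, zero_mul]
  rw [Finset.sum_eq_single i (fun k _ hk => by simp [hk.symm]) (by simp)]
  simp

theorem embP_mulVec (N : ℕ) (P : Matrix (Fin 3 × Fin 3) (Fin 3 × Fin 3) ℂ)
    (ψ : Fin 3 × Fin 3 × HIdx N → ℂ) (i j : Fin 3) (f : HIdx N) :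
    (embP N P *ᵥ ψ) (i, j, f) = ∑ k, ∑ l, P (i, j) (k, l) * ψ (k, l, f) := by
  simp [mulVec, dotProduct, embP, Fintype.sum_prod_type]

theorem embA_Raux_mulVec (N : ℕ) (q u : ℂ) (s : Fin N) (ψ : Fin 3 × Fin 3 × HIdx N → ℂ)
    (i j : Fin 3) (f : HIdx N) :
    (embA N (Raux N q u s) *ᵥ ψ) (i, j, f) = diagWeight q u i (f s) * ψ (i, j, f) +
      swapWeight q u i (f s) * ψ (f s, j, Function.update f s i) := by
  rw [embA_mulVec, sum_Raux_mul N q u s i f fun k g => ψ (k, j, g)]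

theorem embB_Raux_mulVec (N : ℕ) (q u : ℂ) (s : Fin N) (ψ : Fin 3 × Fin 3 × HIdx N → ℂ)
    (i j : Fin 3) (f : HIdx N) :
    (embB N (Raux N q u s) *ᵥ ψ) (i, j, f) = diagWeight q u j (f s) * ψ (i, j, f) +
      swapWeight q u j (f s) * ψ (i, f s, Function.update f s j) := by
  rw [embB_mulVec, sum_Raux_mul N q u s j f fun k g => ψ (i, k, g)]

theorem embA_Kaux_mulVec (N : ℕ) (K : Matrix (Fin 3) (Fin 3) ℂ)
    (ψ : Fin 3 × Fin 3 × HIdx N → ℂ) (i j : Fin 3) (f : HIdx N) :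
    (embA N (Kaux N K) *ᵥ ψ) (i, j, f) = ∑ k, K i k * ψ (k, j, f) := by
  simp [embA_mulVec, Kaux]

theorem localState_embA_Raux_mulVec {N : ℕ} (q u : ℂ) (s : Fin N) (f : HIdx N)
    (ψ : Fin 3 × Fin 3 × HIdx N → ℂ) :
    localState s f (embA N (Raux N q u s) *ᵥ ψ) = actAC q u (localState s f ψ) := by
  funext i j k
  simp [localState, embA_Raux_mulVec, actAC]

theorem localState_embB_Raux_mulVec {N : ℕ} (q u : ℂ) (s : Fin N) (f : HIdx N)
    (ψ : Fin 3 × Fin 3 × HIdx N → ℂ) :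
    localState s f (embB N (Raux N q u s) *ᵥ ψ) = actBC q u (localState s f ψ) := by
  funext i j k
  simp [localState, embB_Raux_mulVec, actBC]

theorem localState_embP_RpM_mulVec {N : ℕ} (q u : ℂ) (s : Fin N) (f : HIdx N)
    (ψ : Fin 3 × Fin 3 × HIdx N → ℂ) :
    localState s f (embP N (RpM q u) *ᵥ ψ) = actAB q u (localState s f ψ) := by
  funext i j k
  simp only [localState, embP_mulVec, actAB, RpM_apply, add_mul, Finset.sum_add_distrib, ite_mul,
    zero_mul, ite_and]
  simp

theorem embB_Raux_mul_embA_Raux_mul_embP {N : ℕ} {q v w : ℂ} (hq : q ≠ 0) (hv : v ≠ 0)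
    (hw : w ≠ 0) (s : Fin N) :
    embB N (Raux N q v s) * embA N (Raux N q (v * w) s) * embP N (RpM q w) =
      embP N (RpM q w) * (embA N (Raux N q (v * w) s) * embB N (Raux N q v s)) := by
  refine ext_of_mulVec_single fun x => ext_localState s fun f => ?_
  simp only [← mulVec_mulVec, localState_embA_Raux_mulVec, localState_embB_Raux_mulVec,
    localState_embP_RpM_mulVec, yang_baxter hq hv hw]

theorem embB_Raux_mul_embA_Raux_mul_embP_eq_zero {N : ℕ} {p w : ℂ} (hp : p ≠ 0)
    (hw : w ^ 6 = 1) (s : Fin N) :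
    embB N (Raux N (p ^ 3) (w * p) s) * embA N (Raux N (p ^ 3) w s) *
      embP N (RpM (p ^ 3) p⁻¹) = 0 := by
  refine ext_of_mulVec_single fun x => ext_localState s fun f => ?_
  simp only [← mulVec_mulVec, localState_embA_Raux_mulVec, localState_embB_Raux_mulVec,
    localState_embP_RpM_mulVec, actBC_actAC_actAB_eq_zero hp hw, zero_mulVec]
  rfl

theorem commute_embB_Raux_embA_Raux {N : ℕ} (q u v : ℂ) {s t : Fin N} (hst : s ≠ t) :
    Commute (embB N (Raux N q u s)) (embA N (Raux N q v t)) := by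
  refine ext_of_mulVec_single fun x => ?_
  funext ⟨i, j, f⟩
  simp only [← mulVec_mulVec, embA_Raux_mulVec, embB_Raux_mulVec,
    Function.update_of_ne hst, Function.update_of_ne hst.symm, Function.update_comm hst]
  ring

theorem commute_embB_Raux_embA_Kaux {N : ℕ} (q u : ℂ) (s : Fin N)
    (K : Matrix (Fin 3) (Fin 3) ℂ) :
    Commute (embB N (Raux N q u s)) (embA N (Kaux N K)) := by
  refine ext_of_mulVec_single fun x => ?_
  funext ⟨i, j, f⟩
  simp only [← mulVec_mulVec, embA_Kaux_mulVec, embB_Raux_mulVec, mul_add,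
    Finset.sum_add_distrib, Finset.mul_sum, mul_left_comm]

theorem embA_mul (N : ℕ) (M M' : Matrix (Fin 3 × HIdx N) (Fin 3 × HIdx N) ℂ) :
    embA N (M * M') = embA N M * embA N M' := by
  ext ⟨i, j, f⟩ ⟨k, l, g⟩
  have := embA_mulVec N M (fun x => embA N M' x (k, l, g)) i j f
  rw [mul_apply]
  refine Eq.trans ?_ this.symm
  simp [embA, mul_apply, Fintype.sum_prod_type]

theorem embB_mul (N : ℕ) (M M' : Matrix (Fin 3 × HIdx N) (Fin 3 × HIdx N) ℂ) :
    embB N (M * M') = embB N M * embB N M' := by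
  ext ⟨i, j, f⟩ ⟨k, l, g⟩
  have := embB_mulVec N M (fun x => embB N M' x (k, l, g)) i j f
  rw [mul_apply]
  refine Eq.trans ?_ this.symm
  simp [embB, mul_apply, Fintype.sum_prod_type]

theorem embA_one (N : ℕ) : embA N 1 = 1 := by
  ext ⟨i, j, f⟩ ⟨k, l, g⟩
  simp only [embA, of_apply, one_apply, Prod.mk.injEq]
  split_ifs <;> simp_all

theorem embB_one (N : ℕ) : embB N 1 = 1 := by
  ext ⟨i, j, f⟩ ⟨k, l, g⟩
  simp only [embB, of_apply, one_apply, Prod.mk.injEq]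
  split_ifs <;> simp_all

theorem embA_list_prod (N : ℕ) (l : List (Matrix (Fin 3 × HIdx N) (Fin 3 × HIdx N) ℂ)) :
    embA N l.prod = (l.map (embA N)).prod := by
  induction l with
  | nil => simpa using embA_one N
  | cons M l ih => simp [embA_mul, ih]

theorem embB_list_prod (N : ℕ) (l : List (Matrix (Fin 3 × HIdx N) (Fin 3 × HIdx N) ℂ)) :
    embB N l.prod = (l.map (embB N)).prod := by
  induction l with
  | nil => simpa using embB_one N
  | cons M l ih => simp [embB_mul, ih]

theorem prod_map_mul_prod_map_cons {ι R : Type*} [Monoid R] {A B : ι → R}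
    (hAB : ∀ i j, i ≠ j → Commute (B i) (A j)) {s : ι} {l : List ι} (hs : s ∉ l) :
    ((s :: l).map B).prod * ((s :: l).map A).prod =
      B s * A s * ((l.map B).prod * (l.map A).prod) := by
  have hc : Commute (l.map B).prod (A s) :=
    Commute.list_prod_left _ _ fun x hx => by
      obtain ⟨t, ht, rfl⟩ := List.mem_map.mp hx
      exact hAB t s fun h => hs (h ▸ ht)
  simp only [List.map_cons, List.prod_cons, mul_assoc]
  rw [← mul_assoc _ (A s), hc.eq, mul_assoc]

/-- An element that can be moved to the left through every `B i * A i` can be moved to the left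
through the ordered product of the `B i` times that of the `A i`. -/
theorem exists_prod_map_mul_prod_map_mul_eq {ι R : Type*} [Monoid R] {A B : ι → R} {P : R}
    (hAB : ∀ i j, i ≠ j → Commute (B i) (A j))
    (hP : ∀ i, B i * A i * P = P * (A i * B i)) {l : List ι} (hl : l.Nodup) :
    ∃ S, (l.map B).prod * (l.map A).prod * P = P * S := by
  induction l with
  | nil => exact ⟨1, by simp⟩
  | cons s l ih =>
    obtain ⟨hs, hl⟩ := List.nodup_cons.mp hl
    obtain ⟨S, hS⟩ := ih hl
    refine ⟨A s * B s * S, ?_⟩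
    rw [prod_map_mul_prod_map_cons hAB hs, mul_assoc, hS, ← mul_assoc, hP, mul_assoc]

theorem prod_map_mul_prod_map_mul_eq_zero {ι R : Type*} [Ring R] {A B : ι → R} {P : R}
    (hAB : ∀ i j, i ≠ j → Commute (B i) (A j))
    (hP : ∀ i, B i * A i * P = P * (A i * B i)) {b : ι} (hb : B b * A b * P = 0)
    {l : List ι} (hl : l.Nodup) (hbl : b ∈ l) :
    (l.map B).prod * (l.map A).prod * P = 0 := by
  induction l with
  | nil => simp at hbl
  | cons s l ih =>
    obtain ⟨hs, hl'⟩ := List.nodup_cons.mp hl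
    rw [prod_map_mul_prod_map_cons hAB hs, mul_assoc]
    rcases List.mem_cons.mp hbl with rfl | hbl
    · obtain ⟨S, hS⟩ := exists_prod_map_mul_prod_map_mul_eq hAB hP hl'
      rw [hS, ← mul_assoc, hb, zero_mul]
    · rw [ih hl' hbl, mul_zero]

/-- Operators on the auxiliary spaces can be moved cyclically under the partial trace. -/
theorem partialTrace_embP_mul_comm (N : ℕ) (P : Matrix (Fin 3 × Fin 3) (Fin 3 × Fin 3) ℂ)
    (X : Matrix (Fin 3 × Fin 3 × HIdx N) (Fin 3 × Fin 3 × HIdx N) ℂ) (f g : HIdx N) :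
    ∑ i, ∑ j, (embP N P * X) (i, j, f) (i, j, g) =
      ∑ i, ∑ j, (X * embP N P) (i, j, f) (i, j, g) := by
  simp only [mul_apply, embP, of_apply, Fintype.sum_prod_type, mul_ite, ite_mul, mul_one,
    mul_zero, zero_mul, Finset.sum_ite_eq, Finset.sum_ite_eq', Finset.mem_univ, if_true]
  have := Finset.sum_comm (s := Finset.univ) (t := Finset.univ)
    (f := fun x y : Fin 3 × Fin 3 => P x y * X (y.1, y.2, f) (x.1, x.2, g))
  simpa only [Fintype.sum_prod_type, mul_comm] using this

/-- the fused transfer matrix `T₂` has the `2N` central zeroes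
`λ = ±q ξ_b`. -/
theorem T2_central_zeroes (N : ℕ) (hN : 1 ≤ N) (q p : ℂ)
    (hq : q ≠ 0) (hq2 : q ^ 2 ≠ 1) (hp : p ^ 3 = q)
    (ζ : Fin N → ℂ) (hζ : ∀ b, ζ b ≠ 0) (K : Matrix (Fin 3) (Fin 3) ℂ)
    (hK : ∀ w : ℂ, w ≠ 0 → RpM q w * (K ⊗ₖ K) = (K ⊗ₖ K) * RpM q w)
    (b : Fin N) (u : ℂ) (hu : u ^ 6 = q ^ 2 * (ζ b ^ 3) ^ 2) :
    T2 N q p ζ K u = 0 := by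
  have hp0 : p ≠ 0 := by rintro rfl; exact hq (by rw [← hp]; norm_num)
  have hu0 : u ≠ 0 := by
    rintro rfl
    have : q ^ 2 * (ζ b ^ 3) ^ 2 ≠ 0 := by have := hζ b; positivity
    exact this (by rw [← hu]; norm_num)
  have hvanish : embB N (Mon N q ζ K u) * embA N (Mon N q ζ K (u / p)) *
      embP N (RpM q p⁻¹) = 0 := by
    set B : Fin N → _ := fun s => embB N (Raux N q (u / ζ s) s)
    set A : Fin N → _ := fun s => embA N (Raux N q (u / p / ζ s) s)
    have hprod : ((List.finRange N).reverse.map B).prod *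
        ((List.finRange N).reverse.map A).prod * embP N (RpM q p⁻¹) = 0 := by
      refine prod_map_mul_prod_map_mul_eq_zero (b := b)
        (fun s t hst => commute_embB_Raux_embA_Raux q _ _ hst) (fun s => ?_) ?_
        (List.nodup_reverse.mpr (List.nodup_finRange N)) (by simp)
      · have h := embB_Raux_mul_embA_Raux_mul_embP hq (div_ne_zero hu0 (hζ s))
          (inv_ne_zero hp0) s
        rwa [show u / ζ s * p⁻¹ = u / p / ζ s by ring] at h
      · have hw : (u / p / ζ b) ^ 6 = 1 := by
          have := hζ b
          field_simp
          rw [hu, ← hp]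
          ring
        have h := embB_Raux_mul_embA_Raux_mul_embP_eq_zero hp0 hw b
        rwa [hp, show u / p / ζ b * p = u / ζ b by field_simp] at h
    have hK' : Commute ((List.finRange N).reverse.map B).prod (embA N (Kaux N K)) :=
      Commute.list_prod_left _ _ fun x hx => by
        obtain ⟨t, -, rfl⟩ := List.mem_map.mp hx
        exact commute_embB_Raux_embA_Kaux q _ t K
    simp only [Mon, embA_mul, embB_mul, embA_list_prod, embB_list_prod, List.map_map,
      Function.comp_def]
    change embB N (Kaux N K) * (List.map B _).prod *
      (embA N (Kaux N K) * (List.map A _).prod) * _ = 0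
    rw [mul_assoc (embB N (Kaux N K)), ← mul_assoc _ (embA N (Kaux N K)), hK'.eq]
    simp only [mul_assoc] at hprod ⊢
    rw [hprod, mul_zero, mul_zero]
  have hPm : embP N (Pm q p) = (2 * (q⁻¹ - q))⁻¹ • embP N (RpM q p⁻¹) := by
    ext x y
    simp [embP, Pm, mul_assoc]
  ext f g
  simp only [T2, of_apply]
  rw [mul_assoc, partialTrace_embP_mul_comm]
  rw [hPm, Matrix.mul_smul, hvanish]
  simp
end

section
/- For the diagonal twist K = diag(α, β, γ), the transfer matrix T₁ has the following Laurent polynomial structure and asymptotics: there exist operators c₀, c₁, …, c_N ∈ End(H) such that for all u ≠ 0, T₁(u) = u^{−3N} Σ_{m=0}^{N} c_m u^{6m} (equivalently, λ^N T₁ is a polynomial of degree N in λ² = u⁶), with leading coefficient c_N = (α D₁ + β D₂ + γ D₃) / ∏_{n=1}^{N} ξ_n and lowest coefficient c₀ = (−1)^N (∏_{n=1}^{N} ξ_n) (α D₁⁻¹ + β D₂⁻¹ + γ D₃⁻¹). -/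
open Matrix Kronecker BigOperators

/-- Diagonal twist matrix `K⁽¹⁾ = diag(α, β, γ)`. -/
noncomputable def Ktw1 (α β γ : ℂ) : Matrix (Fin 3) (Fin 3) ℂ :=
  Matrix.diagonal ![α, β, γ]

/-- Cyclic twist matrix `K⁽²⁾ = αE₁₃ + βE₂₁ + γE₃₂`. -/
noncomputable def Ktw2 (α β γ : ℂ) : Matrix (Fin 3) (Fin 3) ℂ :=
  α • Eb 0 2 + β • Eb 1 0 + γ • Eb 2 1

/-- Cyclic twist matrix `K⁽³⁾ = βE₁₂ + γE₂₃ + αE₃₁`. -/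
noncomputable def Ktw3 (α β γ : ℂ) : Matrix (Fin 3) (Fin 3) ℂ :=
  β • Eb 0 1 + γ • Eb 1 2 + α • Eb 2 0

/-- Number of tensor factors of the basis vector indexed by `f` in state `i`. -/
noncomputable def cnt (N : ℕ) (f : HIdx N) (i : Fin 3) : ℕ :=
  (Finset.univ.filter fun m => f m = i).card

/-- The diagonal operator `D_i = q^{N_i}` on `H`. -/
noncomputable def Dop (N : ℕ) (q : ℂ) (i : Fin 3) : Matrix (HIdx N) (HIdx N) ℂ :=
  Matrix.diagonal fun f => q ^ cnt N f i

/-- The inverse diagonal operator `D_i⁻¹ = q^{−N_i}` on `H`. -/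
noncomputable def DopInv (N : ℕ) (q : ℂ) (i : Fin 3) : Matrix (HIdx N) (HIdx N) ℂ :=
  Matrix.diagonal fun f => (q ^ cnt N f i)⁻¹


/-! ### Products of matrix pencils -/

/-- A product of linear pencils `B b + t A b` is a polynomial in `t` whose extreme coefficients
are the products of the `A b` and of the `B b`. -/
theorem exists_coeff_prod_pencil {ι R : Type*} [Ring R] [Algebra ℂ R] (A B : ι → R)
    (L : List ι) :
    ∃ c : ℕ → R, (∀ t : ℂ, (L.map fun b => B b + t • A b).prod
        = ∑ m ∈ Finset.range (L.length + 1), t ^ m • c m)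
      ∧ (∀ m, L.length < m → c m = 0)
      ∧ c L.length = (L.map A).prod ∧ c 0 = (L.map B).prod := by
  induction L with
  | nil =>
    refine ⟨fun m => if m = 0 then 1 else 0, fun t => by simp, fun m hm => ?_, by simp, by simp⟩
    exact if_neg (by simpa using Nat.ne_of_gt hm)
  | cons b L ih =>
    obtain ⟨c, hc, hz, hl, h0⟩ := ih
    refine ⟨fun m => B b * c m + Nat.casesOn m 0 fun k => A b * c k, fun t => ?_, fun m hm => ?_,
      ?_, ?_⟩
    · rw [List.map_cons, List.prod_cons, hc, List.length_cons, add_mul]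
      simp only [smul_add, Finset.sum_add_distrib]
      congr 1
      · rw [Finset.sum_range_succ _ (L.length + 1), hz _ (Nat.lt_succ_self _), Finset.mul_sum]
        simp
      · rw [Finset.sum_range_succ' _ (L.length + 1), Finset.mul_sum]
        simp [pow_succ, mul_smul]
    · cases m with
      | zero => simp at hm
      | succ k =>
        rw [List.length_cons] at hm
        simp [hz (k + 1) (by omega), hz k (by omega)]
    · simp [hz _ (Nat.lt_succ_self _), hl]
    · simp [h0]

/-- Conjugation by `G` and rescaling by `s` pass through a product. -/
theorem prod_map_conj_smul {ι R : Type*} [Ring R] [Algebra ℂ R] {G G' : R} (h : G * G' = 1)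
    (h' : G' * G = 1) (s : ℂ) (F : ι → R) (L : List ι) :
    (L.map fun b => G * (s • F b) * G').prod
      = G * (s ^ L.length • (L.map F).prod) * G' := by
  induction L with
  | nil => simp [h]
  | cons b L ih =>
    rw [List.map_cons, List.prod_cons, ih, List.map_cons, List.prod_cons, List.length_cons]
    calc _ = G * (s • F b) * (G' * G) * (s ^ L.length • (L.map F).prod) * G' := by
            simp only [mul_assoc]
      _ = _ := by
            rw [h', mul_one, mul_assoc G, smul_mul_smul_comm, pow_succ']

/-- `A` is triangular for the strict order `r`, with diagonal part `a`. -/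
def IsTriangularWith {n : Type*} [DecidableEq n] (r : n → n → Prop) (A : Matrix n n ℂ)
    (a : n → ℂ) : Prop :=
  ∀ x y, ¬ r x y → A x y = if x = y then a x else 0

theorem IsTriangularWith.mul {n : Type*} [Fintype n] [DecidableEq n] {r : n → n → Prop}
    [IsStrictOrder n r] {A A' : Matrix n n ℂ} {a a' : n → ℂ} (hA : IsTriangularWith r A a)
    (hA' : IsTriangularWith r A' a') : IsTriangularWith r (A * A') (a * a') := by
  intro x y hxy
  rw [Matrix.mul_apply, Finset.sum_eq_single x]
  · rw [hA x x (irrefl x), hA' x y hxy]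
    simp
  · intro z _ hz
    by_cases hxz : r x z
    · have hzy : ¬ r z y := fun h => hxy (_root_.trans hxz h)
      rw [hA' z y hzy, if_neg, mul_zero]
      rintro rfl
      exact hxy hxz
    · rw [hA x z hxz, if_neg hz.symm, zero_mul]
  · simp

theorem IsTriangularWith.list_prod {ι n : Type*} [Fintype n] [DecidableEq n]
    {r : n → n → Prop} [IsStrictOrder n r] {A : ι → Matrix n n ℂ} {a : ι → n → ℂ}
    (hA : ∀ b, IsTriangularWith r (A b) (a b)) (L : List ι) :
    IsTriangularWith r (L.map A).prod (L.map a).prod := by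
  induction L with
  | nil => intro x y _; simp [Matrix.one_apply]
  | cons b L ih => simpa using (hA b).mul ih

/-! ### Triangular decomposition of the R-matrix -/

/-- Coefficient of `u³` in the R-matrix after the gauge transformation `diag(1, u², u⁴)`. -/
noncomputable def RUpper (q : ℂ) (i a j b : Fin 3) : ℂ :=
  if i = j then (if a = b then (if i = a then q else 1) else 0)
  else if i < j ∧ a = j ∧ b = i then q - q⁻¹ else 0

/-- Coefficient of `u⁻³` in the R-matrix after the gauge transformation `diag(1, u², u⁴)`. -/
noncomputable def RLower (q : ℂ) (i a j b : Fin 3) : ℂ :=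
  if i = j then (if a = b then -(if i = a then q⁻¹ else 1) else 0)
  else if j < i ∧ a = j ∧ b = i then q - q⁻¹ else 0

set_option maxHeartbeats 2000000 in
-- 81 matrix entries are checked one by one
theorem RpM_apply_s12 (q u : ℂ) (hu : u ≠ 0) (i a j b : Fin 3) :
    RpM q u (i, a) (j, b)
      = (u ^ 2) ^ (i : ℕ) * (u ^ 3 * RUpper q i a j b + (u ^ 3)⁻¹ * RLower q i a j b)
        * ((u ^ 2) ^ (j : ℕ))⁻¹ := by
  fin_cases i <;> fin_cases j <;> fin_cases a <;> fin_cases b <;>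
    simp [RpM, RUpper, RLower, Fin.sum_univ_three, Eb, Matrix.add_apply] <;>
    (try field_simp) <;> ring

/-- A one-site operator with entries `s F`, conjugated by `diag(1, z⁻², z⁻⁴)` in the auxiliary
space and acting on the auxiliary space and the `b`-th factor of `H`. -/
noncomputable def gaugedSite (N : ℕ) (z s : ℂ) (F : Fin 3 → Fin 3 → Fin 3 → Fin 3 → ℂ)
    (b : Fin N) : Matrix (Fin 3 × HIdx N) (Fin 3 × HIdx N) ℂ :=
  Matrix.of fun x y => ((z ^ 2) ^ (x.1 : ℕ))⁻¹ * (s * F x.1 (x.2 b) y.1 (y.2 b))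
    * (z ^ 2) ^ (y.1 : ℕ) * (if ∀ c, c ≠ b → x.2 c = y.2 c then 1 else 0)

/-- The gauge matrix `diag(1, u², u⁴)` on the auxiliary space, identity on `H`. -/
noncomputable def auxGauge (N : ℕ) (u : ℂ) : Matrix (Fin 3 × HIdx N) (Fin 3 × HIdx N) ℂ :=
  Matrix.diagonal fun x => (u ^ 2) ^ (x.1 : ℕ)

/-- The inverse of `auxGauge N u`. -/
noncomputable def auxGaugeInv (N : ℕ) (u : ℂ) : Matrix (Fin 3 × HIdx N) (Fin 3 × HIdx N) ℂ :=
  Matrix.diagonal fun x => ((u ^ 2) ^ (x.1 : ℕ))⁻¹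

theorem auxGauge_mul_auxGaugeInv (N : ℕ) {u : ℂ} (hu : u ≠ 0) :
    auxGauge N u * auxGaugeInv N u = 1 := by
  simp [auxGauge, auxGaugeInv, Matrix.diagonal_mul_diagonal, hu]

theorem auxGaugeInv_mul_auxGauge (N : ℕ) {u : ℂ} (hu : u ≠ 0) :
    auxGaugeInv N u * auxGauge N u = 1 := by
  simp [auxGauge, auxGaugeInv, Matrix.diagonal_mul_diagonal, hu]

theorem Raux_eq_auxGauge_conj (N : ℕ) (q : ℂ) {u z : ℂ} (hu : u ≠ 0) (hz : z ≠ 0) (b : Fin N) :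
    Raux N q (u / z) b
      = auxGauge N u * ((u ^ 3)⁻¹ • (gaugedSite N z (z ^ 3) (RLower q) b
          + u ^ 6 • gaugedSite N z (z ^ 3)⁻¹ (RUpper q) b)) * auxGaugeInv N u := by
  ext x y
  rw [auxGauge, auxGaugeInv, Matrix.mul_diagonal, Matrix.diagonal_mul]
  simp only [Raux, gaugedSite, Matrix.of_apply, Matrix.smul_apply, Matrix.add_apply, smul_eq_mul,
    RpM_apply_s12 q (u / z) (div_ne_zero hu hz)]
  generalize (if ∀ c, c ≠ b → x.2 c = y.2 c then (1 : ℂ) else 0) = e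
  simp only [div_pow]
  field_simp
  ring

/-- A site operator whose auxiliary-triangular profile `F` has diagonal part `d` is triangular. -/
theorem isTriangularWith_gaugedSite (N : ℕ) {z : ℂ} (hz : z ≠ 0) (s : ℂ)
    {F : Fin 3 → Fin 3 → Fin 3 → Fin 3 → ℂ} {d : Fin 3 → Fin 3 → ℂ}
    {r : Fin 3 → Fin 3 → Prop}
    (hF : ∀ i a j b, ¬ r i j → F i a j b = if i = j ∧ a = b then d i a else 0) (b : Fin N) :
    IsTriangularWith (InvImage r Prod.fst) (gaugedSite N z s F b)
      fun x => s * d x.1 (x.2 b) := by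
  rintro ⟨i, f⟩ ⟨j, g⟩ h
  simp only [gaugedSite, Matrix.of_apply, hF i (f b) j (g b) h]
  by_cases hij : i = j
  · subst hij
    by_cases hfg : f = g
    · subst hfg
      simp only [and_self, if_true, implies_true, mul_one]
      field_simp
    · rw [if_neg (c := (i, f) = (i, g)) (by simpa using hfg)]
      by_cases hb : f b = g b
      · rw [if_neg (c := ∀ c, c ≠ b → f c = g c), mul_zero]
        intro hc
        exact hfg (funext fun c => (eq_or_ne c b).elim (fun h => h ▸ hb) (hc c))
      · simp [hb]
  · simp [hij]

theorem isStrictOrder_invImage {m n : Type*} (r : n → n → Prop) [IsStrictOrder n r]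
    (φ : m → n) : IsStrictOrder m (InvImage r φ) where
  irrefl x := irrefl (r := r) (φ x)
  trans _ _ _ h h' := _root_.trans (r := r) h h'

/-- Diagonal blocks of an ordered product of triangular site operators. -/
theorem prod_gaugedSite_apply (N : ℕ) {ζ : Fin N → ℂ} (hζ : ∀ b, ζ b ≠ 0) (s : Fin N → ℂ)
    {F : Fin 3 → Fin 3 → Fin 3 → Fin 3 → ℂ} {d : Fin 3 → Fin 3 → ℂ}
    (r : Fin 3 → Fin 3 → Prop) [IsStrictOrder (Fin 3) r]
    (hF : ∀ i a j b, ¬ r i j → F i a j b = if i = j ∧ a = b then d i a else 0)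
    (i : Fin 3) (f g : HIdx N) :
    ((List.finRange N).reverse.map fun b => gaugedSite N (ζ b) (s b) F b).prod (i, f) (i, g)
      = if f = g then (∏ b, s b) * ∏ b, d i (f b) else 0 := by
  have : IsStrictOrder (Fin 3 × HIdx N) (InvImage r Prod.fst) := isStrictOrder_invImage r _
  rw [IsTriangularWith.list_prod
    (fun b => isTriangularWith_gaugedSite N (hζ b) (s b) hF b) (List.finRange N).reverse
    (i, f) (i, g) (irrefl (r := r) i), (List.reverse_perm _).map _ |>.prod_eq,
    ← List.ofFn_eq_map, List.prod_ofFn]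
  simp [Finset.prod_mul_distrib]

theorem RUpper_of_not_lt (q : ℂ) (i a j b : Fin 3) (h : ¬ i < j) :
    RUpper q i a j b = if i = j ∧ a = b then (if a = i then q else 1) else 0 := by
  simp only [RUpper, h, false_and, if_false, ite_and, eq_comm (a := i) (b := a)]

theorem RLower_of_not_gt (q : ℂ) (i a j b : Fin 3) (h : ¬ i > j) :
    RLower q i a j b = if i = j ∧ a = b then -(if a = i then q⁻¹ else 1) else 0 := by
  simp only [RLower, show ¬ j < i from h, false_and, if_false, ite_and, eq_comm (a := i) (b := a)]

theorem prod_ite_eq_pow_cnt (N : ℕ) (q : ℂ) (f : HIdx N) (i : Fin 3) :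
    ∏ b, (if f b = i then q else 1) = q ^ cnt N f i := by
  simp [Finset.prod_ite, cnt]

theorem Kaux_diagonal (N : ℕ) (d : Fin 3 → ℂ) :
    Kaux N (Matrix.diagonal d) = Matrix.diagonal fun x => d x.1 := by
  ext ⟨i, f⟩ ⟨j, g⟩
  simp only [Kaux, Matrix.of_apply, Matrix.diagonal_apply, Prod.mk.injEq]
  by_cases hij : i = j <;> by_cases hfg : f = g <;> simp [hij, hfg]

/-- Laurent polynomial structure and asymptotics of `T₁` for the
diagonal twist `K = diag(α, β, γ)`. -/
theorem T1_Laurent_structure_diagonal_twist (N : ℕ) (hN : 1 ≤ N) (q p : ℂ)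
    (hq : q ≠ 0) (hq2 : q ^ 2 ≠ 1) (hp : p ^ 3 = q)
    (ζ : Fin N → ℂ) (hζ : ∀ b, ζ b ≠ 0) (α β γ : ℂ) :
    ∃ c : Fin (N + 1) → Matrix (HIdx N) (HIdx N) ℂ,
      (∀ u : ℂ, u ≠ 0 →
        T1 N q ζ (Ktw1 α β γ) u
          = u ^ (-(3 * (N : ℤ))) • ∑ m : Fin (N + 1), u ^ (6 * (m : ℕ)) • c m)
      ∧ c (Fin.last N)
          = (∏ n, ζ n ^ 3)⁻¹ • (α • Dop N q 0 + β • Dop N q 1 + γ • Dop N q 2)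
      ∧ c 0
          = ((-1 : ℂ) ^ N * ∏ n, ζ n ^ 3)
              • (α • DopInv N q 0 + β • DopInv N q 1 + γ • DopInv N q 2) := by
  obtain ⟨c, hc, -, hcN, hc0⟩ := exists_coeff_prod_pencil
    (fun b => gaugedSite N (ζ b) (ζ b ^ 3)⁻¹ (RUpper q) b)
    (fun b => gaugedSite N (ζ b) (ζ b ^ 3) (RLower q) b) (List.finRange N).reverse
  simp only [List.length_reverse, List.length_finRange, Finset.sum_range] at hc hcN
  refine ⟨fun m => Matrix.of fun f g => ∑ i, ![α, β, γ] i * c m (i, f) (i, g), fun u hu => ?_,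
    ?_, ?_⟩
  · have hM : Mon N q ζ (Ktw1 α β γ) u
        = (Matrix.diagonal fun x => ![α, β, γ] x.1) * (auxGauge N u * ((u ^ 3)⁻¹ ^ N •
          ∑ m : Fin (N + 1), (u ^ 6) ^ (m : ℕ) • c m) * auxGaugeInv N u) := by
      rw [Mon, Ktw1, Kaux_diagonal, ← hc]
      simp only [Raux_eq_auxGauge_conj N q hu (hζ _)]
      rw [prod_map_conj_smul (auxGauge_mul_auxGaugeInv N hu) (auxGaugeInv_mul_auxGauge N hu)]
      simp
    have hs : (u ^ 3)⁻¹ ^ N = u ^ (-(3 * (N : ℤ))) := by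
      rw [_root_.zpow_neg, _root_.zpow_mul, inv_pow]
      norm_cast
    ext f g
    simp only [T1, hM, hs, Matrix.of_apply, Matrix.diagonal_mul, auxGauge, auxGaugeInv,
      Matrix.mul_diagonal, Matrix.smul_apply, Matrix.sum_apply, smul_eq_mul, Finset.mul_sum,
      Finset.sum_mul]
    rw [Finset.sum_comm]
    refine Finset.sum_congr rfl fun m _ => Finset.sum_congr rfl fun i _ => ?_
    rw [pow_mul]
    field_simp
  · ext f g
    simp only [Fin.val_last, hcN, Matrix.of_apply,
      prod_gaugedSite_apply N hζ _ (· < ·) (RUpper_of_not_lt q), prod_ite_eq_pow_cnt]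
    by_cases hfg : f = g
    · subst hfg
      simp [Fin.sum_univ_three, Dop, Finset.prod_inv_distrib]
      ring
    · simp [Dop, hfg]
  · ext f g
    simp only [Fin.val_zero, hc0, Matrix.of_apply,
      prod_gaugedSite_apply N hζ _ (· > ·) (RLower_of_not_gt q), Finset.prod_neg,
      prod_ite_eq_pow_cnt]
    by_cases hfg : f = g
    · subst hfg
      simp [Fin.sum_univ_three, DopInv]
      ring
    · simp [DopInv, hfg]
end

section
/- Sum rule for the transfer matrix (diagonal twist): assume in addition that ξ₁², …, ξ_N² are pairwise distinct and K = diag(α, β, γ). Then the operator identity (1/2)[α(D₁ − D₁⁻¹) + β(D₂ − D₂⁻¹) + γ(D₃ − D₃⁻¹)] = Σ_{n=1}^{N} T₁(ζ_n) / (2 ∏_{b=1, b≠n}^{N} (ξ_n/ξ_b − ξ_b/ξ_n)) holds in End(H). -/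
open Matrix Kronecker BigOperators

/-- The coefficient of `u³` in `R_q(u/ζ)`, up to the gauge factors `u ^ (-2 * (j - i))` of the
entries with auxiliary indices `i`, `j`. -/
noncomputable def RpMLead (q ζ : ℂ) : Matrix (Fin 3 × Fin 3) (Fin 3 × Fin 3) ℂ :=
  Matrix.of fun x y =>
    if x.1 = y.1 then (if x.2 = y.2 then (if x.2 = x.1 then q else 1) * (ζ ^ 3)⁻¹ else 0)
    else if x.1 < y.1 ∧ x.2 = y.1 ∧ y.2 = x.1 then
      (q - q⁻¹) * ζ ^ (2 * (((y.1 : ℕ) : ℤ) - ((x.1 : ℕ) : ℤ)) - 3)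
    else 0

/-- The coefficient of `u⁻³` in `R_q(u/ζ)`, up to the gauge factors `u ^ (-2 * (j - i))` of the
entries with auxiliary indices `i`, `j`. -/
noncomputable def RpMLow (q ζ : ℂ) : Matrix (Fin 3 × Fin 3) (Fin 3 × Fin 3) ℂ :=
  Matrix.of fun x y =>
    if x.1 = y.1 then (if x.2 = y.2 then -((if x.2 = x.1 then q⁻¹ else 1) * ζ ^ 3) else 0)
    else if y.1 < x.1 ∧ x.2 = y.1 ∧ y.2 = x.1 then
      (q - q⁻¹) * ζ ^ (2 * (((y.1 : ℕ) : ℤ) - ((x.1 : ℕ) : ℤ)) + 3)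
    else 0

set_option maxHeartbeats 1000000 in
lemma RpM_div_apply {q u ζ : ℂ} (hq : q ≠ 0) (hu : u ≠ 0) (hζ : ζ ≠ 0) (x y : Fin 3 × Fin 3) :
    RpM q (u / ζ) x y = u ^ (-3 - 2 * (((y.1 : ℕ) : ℤ) - ((x.1 : ℕ) : ℤ))) *
      (RpMLead q ζ x y * u ^ 6 + RpMLow q ζ x y) := by
  obtain ⟨i, a⟩ := x
  obtain ⟨j, b⟩ := y
  fin_cases i <;> fin_cases j <;> fin_cases a <;> fin_cases b <;>
    simp [RpM, RpMLead, RpMLow, Eb, Fin.sum_univ_three, Matrix.kroneckerMap_apply,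
      _root_.zpow_neg, div_zpow] <;> field_simp <;> try ring

open Polynomial in
/-- Up to the gauge factors `u ^ (-2 * (j - i))`, the entries of `F u` are Laurent polynomials in
`u³` with exponents `-n, -n + 2, …, n`, whose coefficients of `u ^ (3 * n)` and `u ^ (-3 * n)` are
the entries of `A` and `B`. -/
def HasExtremeCoeffs {ι : Type*} (n : ℕ) (F : ℂ → Matrix (Fin 3 × ι) (Fin 3 × ι) ℂ)
    (A B : Matrix (Fin 3 × ι) (Fin 3 × ι) ℂ) : Prop :=
  ∀ x y, ∃ P : ℂ[X], P.natDegree ≤ n ∧ P.coeff n = A x y ∧ P.coeff 0 = B x y ∧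
    ∀ u : ℂ, u ≠ 0 →
      F u x y = u ^ (-3 * (n : ℤ) - 2 * (((y.1 : ℕ) : ℤ) - ((x.1 : ℕ) : ℤ))) * P.eval (u ^ 6)

lemma HasExtremeCoeffs.one {ι : Type*} [DecidableEq ι] :
    HasExtremeCoeffs (ι := ι) 0 (fun _ => 1) 1 1 := by
  intro x y
  refine ⟨Polynomial.C ((1 : Matrix (Fin 3 × ι) (Fin 3 × ι) ℂ) x y), by simp, by simp, by simp, ?_⟩
  intro u hu
  by_cases h : x = y
  · subst h; simp
  · simp [Matrix.one_apply_ne h]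

lemma HasExtremeCoeffs.mul {ι : Type*} [Fintype ι] {m n : ℕ}
    {F G : ℂ → Matrix (Fin 3 × ι) (Fin 3 × ι) ℂ} {A B A' B' : Matrix (Fin 3 × ι) (Fin 3 × ι) ℂ}
    (hF : HasExtremeCoeffs m F A B) (hG : HasExtremeCoeffs n G A' B') :
    HasExtremeCoeffs (m + n) (fun u => F u * G u) (A * A') (B * B') := by
  choose P hPdeg hPtop hPbot hP using hF
  choose Q hQdeg hQtop hQbot hQ using hG
  intro x y
  refine ⟨∑ z, P x z * Q z y, ?_, ?_, ?_, ?_⟩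
  · exact Polynomial.natDegree_sum_le_of_forall_le _ _ fun z _ =>
      Polynomial.natDegree_mul_le_of_le (hPdeg x z) (hQdeg z y)
  · simp only [Polynomial.finsetSum_coeff, Matrix.mul_apply]
    refine Finset.sum_congr rfl fun z _ => ?_
    rw [Polynomial.coeff_mul_add_eq_of_natDegree_le (hPdeg x z) (hQdeg z y), hPtop, hQtop]
  · simp only [Polynomial.finsetSum_coeff, Matrix.mul_apply, Polynomial.mul_coeff_zero, hPbot,
      hQbot]
  · intro u hu
    simp only [Matrix.mul_apply, Polynomial.eval_finsetSum, Finset.mul_sum, Polynomial.eval_mul]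
    refine Finset.sum_congr rfl fun z _ => ?_
    rw [hP x z u hu, hQ z y u hu, mul_mul_mul_comm, ← zpow_add₀ hu]
    congr 2
    push_cast
    ring

/-- `A` is block upper triangular in the auxiliary space, with diagonal blocks `diagonal (d i)`. -/
def IsAuxUpperTriangular {ι : Type*} [DecidableEq ι] (A : Matrix (Fin 3 × ι) (Fin 3 × ι) ℂ)
    (d : Fin 3 → ι → ℂ) : Prop :=
  (∀ i j f g, j < i → A (i, f) (j, g) = 0) ∧
    ∀ i f g, A (i, f) (i, g) = if f = g then d i f else 0

lemma IsAuxUpperTriangular.one {ι : Type*} [DecidableEq ι] :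
    IsAuxUpperTriangular (1 : Matrix (Fin 3 × ι) (Fin 3 × ι) ℂ) 1 := by
  refine ⟨fun i j f g h => Matrix.one_apply_ne (by simp [h.ne']), fun i f g => ?_⟩
  simp [Matrix.one_apply]

lemma IsAuxUpperTriangular.mul {ι : Type*} [DecidableEq ι] [Fintype ι]
    {A B : Matrix (Fin 3 × ι) (Fin 3 × ι) ℂ} {d e : Fin 3 → ι → ℂ}
    (hA : IsAuxUpperTriangular A d) (hB : IsAuxUpperTriangular B e) :
    IsAuxUpperTriangular (A * B) (d * e) := by
  refine ⟨fun i j f g h => ?_, fun i f g => ?_⟩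
  · rw [Matrix.mul_apply]
    refine Finset.sum_eq_zero fun ⟨k, c⟩ _ => ?_
    rcases lt_or_ge k i with hk | hk
    · rw [hA.1 _ _ _ _ hk, zero_mul]
    · rw [hB.1 _ _ _ _ (h.trans_le hk), mul_zero]
  · rw [Matrix.mul_apply, Fintype.sum_prod_type, Finset.sum_eq_single i]
    · simp only [hA.2, hB.2, ite_mul, zero_mul]
      simp
    · intro k _ hk
      refine Finset.sum_eq_zero fun c _ => ?_
      rcases lt_or_gt_of_ne hk with hk | hk
      · rw [hA.1 _ _ _ _ hk, zero_mul]
      · rw [hB.1 _ _ _ _ hk, mul_zero]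
    · simp

/-- A matrix acting on the auxiliary space and the `b`-th factor of the quantum space, identity
elsewhere. -/
noncomputable def siteEmb (N : ℕ) (b : Fin N) (A : Matrix (Fin 3 × Fin 3) (Fin 3 × Fin 3) ℂ) :
    Matrix (Fin 3 × HIdx N) (Fin 3 × HIdx N) ℂ :=
  Matrix.of fun x y =>
    A (x.1, x.2 b) (y.1, y.2 b) * (if ∀ c, c ≠ b → x.2 c = y.2 c then 1 else 0)

lemma IsAuxUpperTriangular.siteEmb {N : ℕ} (b : Fin N)
    {A : Matrix (Fin 3 × Fin 3) (Fin 3 × Fin 3) ℂ} {d : Fin 3 → Fin 3 → ℂ}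
    (hA : IsAuxUpperTriangular A d) :
    IsAuxUpperTriangular (siteEmb N b A) fun i f => d i (f b) := by
  refine ⟨fun i j f g h => ?_, fun i f g => ?_⟩
  · simp [_root_.siteEmb, hA.1 _ _ _ _ h]
  · have key : f = g ↔ f b = g b ∧ ∀ c, c ≠ b → f c = g c :=
      ⟨by rintro rfl; simp, fun h => funext fun c => by
        by_cases hc : c = b
        · exact hc ▸ h.1
        · exact h.2 c hc⟩
    simp only [_root_.siteEmb, Matrix.of_apply, hA.2, key, ite_and]
    split_ifs <;> simp

lemma siteEmb_transpose {N : ℕ} (b : Fin N) (A : Matrix (Fin 3 × Fin 3) (Fin 3 × Fin 3) ℂ) :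
    (siteEmb N b A)ᵀ = siteEmb N b Aᵀ := by
  ext x y
  simp [siteEmb, eq_comm]

lemma isAuxUpperTriangular_RpMLead (q ζ : ℂ) :
    IsAuxUpperTriangular (RpMLead q ζ) fun i a => (if a = i then q else 1) * (ζ ^ 3)⁻¹ := by
  refine ⟨fun i j f g h => ?_, fun i f g => by simp [RpMLead]⟩
  simp [RpMLead, h.ne', h.not_gt]

lemma isAuxUpperTriangular_RpMLow_transpose (q ζ : ℂ) :
    IsAuxUpperTriangular (RpMLow q ζ)ᵀ fun i a => -((if a = i then q⁻¹ else 1) * ζ ^ 3) := by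
  refine ⟨fun i j f g h => ?_, fun i f g => ?_⟩
  · simp [RpMLow, h.ne, h.not_gt]
  · by_cases hfg : f = g
    · subst hfg; simp [RpMLow]
    · simp [RpMLow, hfg, Ne.symm hfg]

lemma hasExtremeCoeffs_Raux {N : ℕ} {q : ℂ} (hq : q ≠ 0) {z : ℂ} (hz : z ≠ 0) (b : Fin N) :
    HasExtremeCoeffs 1 (fun u => Raux N q (u / z) b) (siteEmb N b (RpMLead q z))
      (siteEmb N b (RpMLow q z)) := by
  intro x y
  refine ⟨Polynomial.C (siteEmb N b (RpMLead q z) x y) * Polynomial.X +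
    Polynomial.C (siteEmb N b (RpMLow q z) x y), Polynomial.natDegree_linear_le,
    by simp, by simp, fun u hu => ?_⟩
  simp only [Raux, siteEmb, Matrix.of_apply, RpM_div_apply hq hu hz, Polynomial.eval_add,
    Polynomial.eval_mul, Polynomial.eval_C, Polynomial.eval_X, Nat.cast_one, mul_one]
  ring

lemma exists_hasExtremeCoeffs_prod_Raux {N : ℕ} {q : ℂ} (hq : q ≠ 0) {ζ : Fin N → ℂ}
    (hζ : ∀ b, ζ b ≠ 0)
    (L : List (Fin N)) :
    ∃ A B, HasExtremeCoeffs L.length (fun u => (L.map fun b => Raux N q (u / ζ b) b).prod) A B ∧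
      IsAuxUpperTriangular A
        (fun i f => (L.map fun b => (if f b = i then q else 1) * (ζ b ^ 3)⁻¹).prod) ∧
      IsAuxUpperTriangular Bᵀ
        (fun i f => (L.map fun b => -((if f b = i then q⁻¹ else 1) * ζ b ^ 3)).prod) := by
  induction L with
  | nil => exact ⟨1, 1, .one, .one, by rw [Matrix.transpose_one]; exact .one⟩
  | cons b L ih =>
    obtain ⟨A, B, hAB, hA, hB⟩ := ih
    refine ⟨_, siteEmb N b (RpMLow q (ζ b)) * B, ?_, ((isAuxUpperTriangular_RpMLead q (ζ b)).siteEmb b).mul hA, ?_⟩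
    · rw [List.length_cons, add_comm]
      simpa using (hasExtremeCoeffs_Raux hq (hζ b) b).mul hAB
    · rw [Matrix.transpose_mul, siteEmb_transpose]
      convert hB.mul ((isAuxUpperTriangular_RpMLow_transpose q (ζ b)).siteEmb b) using 1
      ext i f
      simp [mul_comm]

open Polynomial in
/-- Lagrange interpolation with the additional node `0`. -/
lemma sum_eval_div_mul_prod_sub {K : Type*} [Field K] {N : ℕ} {x : Fin N → K}
    (hx : Function.Injective x) (hx0 : ∀ n, x n ≠ 0) {P : K[X]} (hP : P.natDegree ≤ N) :
    ∑ n, P.eval (x n) / (x n * ∏ b ∈ Finset.univ.erase n, (x n - x b)) =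
      P.coeff N - P.coeff 0 / ∏ b, -x b := by
  have hinj : Function.Injective (fun o : Option (Fin N) => o.elim 0 x) := by
    rintro (_ | a) (_ | b) h
    · rfl
    · exact absurd h.symm (hx0 b)
    · exact absurd h (hx0 a)
    · exact congrArg some (hx h)
  have h := Lagrange.coeff_eq_sum (s := Finset.univ) hinj.injOn (P := P)
    (Polynomial.degree_le_of_natDegree_le hP |>.trans_lt (by simp; norm_cast; omega))
  have h0 : (Finset.univ.erase none : Finset (Option (Fin N))) =
      Finset.univ.map Function.Embedding.some := by ext (_ | _) <;> simp
  have h1 (n : Fin N) : (Finset.univ.erase (some n) : Finset (Option (Fin N))) =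
      Finset.insertNone (Finset.univ.erase n) := by ext (_ | _) <;> simp
  rw [Fintype.sum_option, h0] at h
  simp only [h1, Finset.prod_insertNone, Finset.prod_map, Option.elim, sub_zero, zero_sub,
    Finset.card_univ, Fintype.card_option, Fintype.card_fin, Nat.add_sub_cancel,
    Function.Embedding.some_apply] at h
  rw [h, Polynomial.coeff_zero_eq_eval_zero]
  ring

lemma prod_div_sub_div {N : ℕ} {ξ : Fin N → ℂ} (hξ : ∀ b, ξ b ≠ 0) (n : Fin N) :
    ξ n ^ N * (∏ b ∈ Finset.univ.erase n, (ξ n / ξ b - ξ b / ξ n)) * ∏ b, ξ b =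
      ξ n ^ 2 * ∏ b ∈ Finset.univ.erase n, (ξ n ^ 2 - ξ b ^ 2) := by
  have hn := Finset.mem_univ n
  have hcard : (Finset.univ.erase n).card + 1 = N := by
    rw [Finset.card_erase_add_one hn, Finset.card_univ, Fintype.card_fin]
  have hfactor (b : Fin N) : ξ n / ξ b - ξ b / ξ n = (ξ n ^ 2 - ξ b ^ 2) / (ξ n * ξ b) := by
    have := hξ n
    have := hξ b
    field_simp
  have hne : ∏ b ∈ Finset.univ.erase n, ξ b ≠ 0 := Finset.prod_ne_zero_iff.mpr fun b _ => hξ b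
  have hne' : ξ n ^ (Finset.univ.erase n).card ≠ 0 := pow_ne_zero _ (hξ n)
  rw [← Finset.mul_prod_erase _ _ hn]
  nth_rewrite 1 [← hcard]
  simp only [hfactor, Finset.prod_div_distrib, Finset.prod_mul_distrib, Finset.prod_const]
  field_simp
  ring

lemma sum_prod_Raux_apply {N : ℕ} {q : ℂ} (hq : q ≠ 0) {ζ : Fin N → ℂ} (hζ : ∀ b, ζ b ≠ 0)
    (hdist : ∀ n b : Fin N, n ≠ b → (ζ n ^ 3) ^ 2 ≠ (ζ b ^ 3) ^ 2) (i : Fin 3) (f g : HIdx N) :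
    ∑ n, (∏ b ∈ Finset.univ.erase n, (ζ n ^ 3 / ζ b ^ 3 - ζ b ^ 3 / ζ n ^ 3))⁻¹ *
        ((List.finRange N).reverse.map fun b => Raux N q (ζ n / ζ b) b).prod (i, f) (i, g) =
      if f = g then q ^ cnt N f i - (q ^ cnt N f i)⁻¹ else 0 := by
  obtain ⟨A, B, hAB, hA, hB⟩ :=
    exists_hasExtremeCoeffs_prod_Raux hq hζ (List.finRange N).reverse
  obtain ⟨P, hdeg, htop, hbot, hP⟩ := hAB (i, f) (i, g)
  simp only [List.length_reverse, List.length_finRange] at hdeg htop hP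
  have hξ (b : Fin N) : ζ b ^ 3 ≠ 0 := pow_ne_zero _ (hζ b)
  have hξprod : ∏ b, ζ b ^ 3 ≠ 0 := Finset.prod_ne_zero_iff.mpr fun b _ => hξ b
  have hprod (d : Fin N → ℂ) : ((List.finRange N).reverse.map d).prod = ∏ b, d b := by
    rw [List.map_reverse, List.prod_reverse, ← List.ofFn_eq_map, List.prod_ofFn]
  have hpow (x : ℂ) : ∏ b, (if f b = i then x else 1) = x ^ cnt N f i := by
    rw [Finset.prod_ite, Finset.prod_const, Finset.prod_const_one, mul_one, cnt]
  have hterm (n : Fin N) :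
      (∏ b ∈ Finset.univ.erase n, (ζ n ^ 3 / ζ b ^ 3 - ζ b ^ 3 / ζ n ^ 3))⁻¹ *
        ((List.finRange N).reverse.map fun b => Raux N q (ζ n / ζ b) b).prod (i, f) (i, g) =
      (∏ b, ζ b ^ 3) * (P.eval ((ζ n ^ 3) ^ 2) / ((ζ n ^ 3) ^ 2 *
        ∏ b ∈ Finset.univ.erase n, ((ζ n ^ 3) ^ 2 - (ζ b ^ 3) ^ 2))) := by
    have hexp : ζ n ^ (-3 * (N : ℤ) - 2 * (((i : ℕ) : ℤ) - ((i : ℕ) : ℤ))) =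
        ((ζ n ^ 3) ^ N)⁻¹ := by
      rw [sub_self, mul_zero, sub_zero, neg_mul, _root_.zpow_neg, ← pow_mul]
      norm_cast
    rw [hP _ (hζ n), ← prod_div_sub_div hξ n, hexp, ← pow_mul]
    have := pow_ne_zero N (hξ n)
    field_simp
  have hinj : Function.Injective fun n => (ζ n ^ 3) ^ 2 := fun n b h =>
    by_contra fun hne => hdist n b hne h
  rw [Finset.sum_congr rfl fun n _ => hterm n, ← Finset.mul_sum,
    sum_eval_div_mul_prod_sub hinj (fun n => pow_ne_zero _ (hξ n)) hdeg, htop, hbot,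
    hA.2, ← Matrix.transpose_apply B, hB.2]
  by_cases hfg : f = g
  · subst hfg
    simp only [if_true, hprod, Finset.prod_mul_distrib, Finset.prod_neg, hpow, Finset.prod_inv_distrib,
      inv_pow, Finset.prod_pow _ 2]
    field_simp
  · simp [hfg, Ne.symm hfg]
/-- sum rule for the transfer matrix with diagonal twist. -/
theorem transfer_matrix_sum_rule (N : ℕ) (hN : 1 ≤ N) (q p : ℂ)
    (hq : q ≠ 0) (hq2 : q ^ 2 ≠ 1) (hp : p ^ 3 = q)
    (ζ : Fin N → ℂ) (hζ : ∀ b, ζ b ≠ 0)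
    (hdist : ∀ n b : Fin N, n ≠ b → (ζ n ^ 3) ^ 2 ≠ (ζ b ^ 3) ^ 2)
    (α β γ : ℂ) :
    (1 / 2 : ℂ) • (α • (Dop N q 0 - DopInv N q 0) + β • (Dop N q 1 - DopInv N q 1)
        + γ • (Dop N q 2 - DopInv N q 2))
      = ∑ n : Fin N,
          (2 * ∏ b ∈ Finset.univ.erase n, (ζ n ^ 3 / ζ b ^ 3 - ζ b ^ 3 / ζ n ^ 3))⁻¹
            • T1 N q ζ (Ktw1 α β γ) (ζ n) := by
  ext f g
  have hT (n : Fin N) : T1 N q ζ (Ktw1 α β γ) (ζ n) f g = ∑ i : Fin 3, ![α, β, γ] i *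
      ((List.finRange N).reverse.map fun b => Raux N q (ζ n / ζ b) b).prod (i, f) (i, g) := by
    simp only [T1, Mon, Matrix.of_apply]
    refine Finset.sum_congr rfl fun i _ => ?_
    rw [Matrix.mul_apply, Finset.sum_eq_single (i, f)]
    · simp [Kaux, Ktw1]
    · rintro ⟨j, h⟩ _ hne
      by_cases hj : i = j
      · subst hj
        have : f ≠ h := by rintro rfl; exact hne rfl
        simp [Kaux, this]
      · simp [Kaux, Ktw1, hj]
    · simp
  simp only [Matrix.sum_apply, Matrix.smul_apply, hT, smul_eq_mul]
  have key : ∀ i, _ := fun i => sum_prod_Raux_apply hq hζ hdist i f g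
  calc _ = (1 / 2 : ℂ) * ∑ i : Fin 3, ![α, β, γ] i *
        (if f = g then q ^ cnt N f i - (q ^ cnt N f i)⁻¹ else 0) := by
        simp only [Fin.sum_univ_three, Matrix.add_apply, Matrix.smul_apply, Matrix.sub_apply,
          Dop, DopInv, Matrix.diagonal_apply, smul_eq_mul]
        by_cases h : f = g <;> simp [h]
    _ = _ := by
        simp only [← key, Finset.mul_sum]
        rw [Finset.sum_comm]
        refine Finset.sum_congr rfl fun n _ => Finset.sum_congr rfl fun i _ => ?_
        rw [mul_inv]
        ring
end
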